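/- arXiv:2302.05437 — 6 statements merged into one kernel-verified Lean document; each statement's English description precedes it below -/
import Mathlib

section
/- Let (X_t)_{t≥1} be a martingale difference sequence (with respect to its natural filtration) such that there exists a constant c > 0 with |X_t| ≤ c almost surely for all t ≥ 1, and define σ_t² = E[X_t² | X_{t-1}, …, X_1]. Then for all b > 0, F > 0 and T ≥ 1, the probability of the event { |∑_{t=1}^T X_t| > b and ∑_{t=1}^T σ_t² ≤ F } is at most 2·exp( − b² / (2F + 2cb/3) ). -/
open MeasureTheory Finset

/-!
Let `V n` be the sum of the conditional second moments of `X 1, …, X n`. Since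
`exp x ≤ 1 + x + x² / (2 (1 - a / 3))` whenever `x ≤ a` and `0 ≤ a < 3`, and conditioning on the
past kills the linear term,
`E[exp (l X) | past] ≤ 1 + ψ E[X² | past] ≤ exp (ψ E[X² | past])` with `ψ = l² / (2 (1 - l c / 3))`.
Hence `exp (l (X 1 + ⋯ + X n) - ψ V n)` is a supermartingale started at `1`. On the event that
`X 1 + ⋯ + X n ≥ b` and `V n ≤ F` it is at least `exp (l b - ψ F)`, so Markov's inequality applies,
and the choice `l = b / (F + c b / 3)` gives the one-sided bound. The two-sided bound is the
one-sided one for `X` and `-X`.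
-/

section Exponential

/-- The Bernstein rate `ψ(l)`: a random variable `Y ≤ c` of mean zero satisfies
`E[exp (l Y)] ≤ exp (ψ(l) E[Y²])`. Meaningful only for `l * c < 3`. -/
noncomputable def bernsteinRate (c l : ℝ) : ℝ := l ^ 2 / (2 * (1 - l * c / 3))

lemma bernsteinRate_nonneg {c l : ℝ} (hlc : l * c < 3) : 0 ≤ bernsteinRate c l :=
  div_nonneg (sq_nonneg l) (by linarith)

lemma mul_sub_bernsteinRate_mul {b c F : ℝ} (hF : F ≠ 0) (hD : F + c * b / 3 ≠ 0) :
    b / (F + c * b / 3) * b - bernsteinRate c (b / (F + c * b / 3)) * F =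
      b ^ 2 / (2 * F + 2 * c * b / 3) := by
  have hone : 1 - b / (F + c * b / 3) * c / 3 = F / (F + c * b / 3) := by
    rw [eq_div_iff hD]
    linear_combination -(c / 3) * div_mul_cancel₀ b hD
  rw [bernsteinRate, hone, show 2 * F + 2 * c * b / 3 = 2 * (F + c * b / 3) by ring]
  field_simp
  ring

lemma exp_le_one_add_add_sq_div_two_of_nonpos {x : ℝ} (hx : x ≤ 0) :
    Real.exp x ≤ 1 + x + x ^ 2 / 2 := by
  have hlower := Real.quadratic_le_exp_of_nonneg (neg_nonneg.mpr hx)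
  have hpos : 0 < 1 + x + x ^ 2 / 2 := by nlinarith [sq_nonneg (x + 1)]
  rw [← neg_neg x, Real.exp_neg, neg_neg, inv_le_iff_one_le_mul₀ (Real.exp_pos _)]
  calc 1 ≤ 1 + x ^ 4 / 4 := by linarith [show 0 ≤ x ^ 4 / 4 by positivity]
    _ = (1 + x + x ^ 2 / 2) * (1 + -x + (-x) ^ 2 / 2) := by ring
    _ ≤ (1 + x + x ^ 2 / 2) * Real.exp (-x) := by gcongr

-- Termwise comparison of the exponential series with a geometric one, as `2 * 3 ^ n ≤ (n + 2)!`.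
lemma exp_le_one_add_add_sq_div_of_nonneg {x : ℝ} (hx0 : 0 ≤ x) (hx3 : x < 3) :
    Real.exp x ≤ 1 + x + x ^ 2 / (2 * (1 - x / 3)) := by
  have hexp : HasSum (fun n : ℕ => x ^ n / (n.factorial : ℝ)) (Real.exp x) := by
    rw [Real.exp_eq_exp_ℝ]
    exact NormedSpace.expSeries_div_hasSum_exp x
  have htail := (hasSum_nat_add_iff' 2).mpr hexp
  have hgeom : HasSum (fun n : ℕ => x ^ 2 / 2 * (x / 3) ^ n) (x ^ 2 / 2 * (1 - x / 3)⁻¹) :=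
    (hasSum_geometric_of_lt_one (by positivity) (by linarith)).mul_left _
  have hle (n : ℕ) : x ^ (n + 2) / ((n + 2).factorial : ℝ) ≤ x ^ 2 / 2 * (x / 3) ^ n := by
    have hfact : (2 * 3 ^ n : ℝ) ≤ ((n + 2).factorial : ℝ) := by
      rw [add_comm n 2]
      exact_mod_cast @Nat.factorial_mul_pow_le_factorial 2 n
    calc x ^ (n + 2) / ((n + 2).factorial : ℝ)
        ≤ x ^ (n + 2) / (2 * 3 ^ n) := by gcongr
      _ = x ^ 2 / 2 * (x / 3) ^ n := by rw [pow_add, mul_comm, div_pow, mul_div_mul_comm]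
  have hsum : Real.exp x - (1 + x) ≤ x ^ 2 / 2 * (1 - x / 3)⁻¹ := by
    simpa [sum_range_succ] using hasSum_le hle htail hgeom
  rw [← div_eq_mul_inv, div_div] at hsum
  linarith

lemma exp_le_one_add_add_sq_div {x a : ℝ} (hxa : x ≤ a) (ha0 : 0 ≤ a) (ha3 : a < 3) :
    Real.exp x ≤ 1 + x + x ^ 2 / (2 * (1 - a / 3)) := by
  have hden : 0 < 1 - a / 3 := by linarith
  rcases le_total x 0 with hx | hx
  · refine (exp_le_one_add_add_sq_div_two_of_nonpos hx).trans ?_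
    gcongr
    linarith
  · refine (exp_le_one_add_add_sq_div_of_nonneg hx (hxa.trans_lt ha3)).trans ?_
    gcongr

lemma exp_mul_le_one_add_add_bernsteinRate_mul_sq {c l y : ℝ} (hc : 0 ≤ c) (hl : 0 ≤ l)
    (hlc : l * c < 3) (hy : y ≤ c) :
    Real.exp (l * y) ≤ 1 + l * y + bernsteinRate c l * y ^ 2 := by
  rw [bernsteinRate, div_mul_eq_mul_div, ← mul_pow]
  exact exp_le_one_add_add_sq_div (mul_le_mul_of_nonneg_left hy hl) (mul_nonneg hl hc) hlc

end Exponential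

section CondExp

variable {Ω : Type*} {m m0 : MeasurableSpace Ω} {μ : Measure Ω} [IsFiniteMeasure μ]
  {Y : Ω → ℝ} {c l : ℝ}

lemma integrable_exp_mul_of_ae_le (hY : AEStronglyMeasurable Y μ) (hl : 0 ≤ l)
    (hYc : ∀ᵐ ω ∂μ, Y ω ≤ c) : Integrable (fun ω => Real.exp (l * Y ω)) μ := by
  refine .of_bound (Real.continuous_exp.comp_aestronglyMeasurable (hY.const_mul l))
    (Real.exp (l * c)) ?_
  filter_upwards [hYc] with ω hω
  rw [Real.norm_of_nonneg (Real.exp_nonneg _)]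
  gcongr

lemma condExp_exp_mul_le_exp_bernsteinRate_mul (hm : m ≤ m0) (hY : Integrable Y μ)
    (hY2 : Integrable (fun ω => Y ω ^ 2) μ) (hmean : μ[Y | m] =ᵐ[μ] 0) (hYc : ∀ᵐ ω ∂μ, Y ω ≤ c)
    (hc : 0 ≤ c) (hl : 0 ≤ l) (hlc : l * c < 3) :
    μ[fun ω => Real.exp (l * Y ω) | m] ≤ᵐ[μ]
      fun ω => Real.exp (bernsteinRate c l * (μ[fun ω => Y ω ^ 2 | m]) ω) := by
  have hquad : Integrable ((fun _ => 1) + l • Y + bernsteinRate c l • fun ω => Y ω ^ 2) μ :=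
    ((integrable_const 1).add (hY.smul l)).add (hY2.smul _)
  have hmono : μ[fun ω => Real.exp (l * Y ω) | m] ≤ᵐ[μ]
      μ[(fun _ => 1) + l • Y + bernsteinRate c l • fun ω => Y ω ^ 2 | m] := by
    refine condExp_mono (integrable_exp_mul_of_ae_le hY.aestronglyMeasurable hl hYc) hquad ?_
    filter_upwards [hYc] with ω hω
    exact exp_mul_le_one_add_add_bernsteinRate_mul_sq hc hl hlc hω
  filter_upwards [hmono, hmean, condExp_smul l Y m,
    condExp_smul (bernsteinRate c l) (fun ω => Y ω ^ 2) m,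
    condExp_add ((integrable_const 1).add (hY.smul l)) (hY2.smul (bernsteinRate c l)) m,
    condExp_add (integrable_const (1 : ℝ)) (hY.smul l) m] with ω hle h0 hlin hsq hadd hadd'
  calc (μ[fun ω => Real.exp (l * Y ω) | m]) ω
      ≤ bernsteinRate c l * (μ[fun ω => Y ω ^ 2 | m]) ω + 1 := by
        simpa [hadd, hadd', hlin, hsq, h0, condExp_const hm, add_comm] using hle
    _ ≤ Real.exp (bernsteinRate c l * (μ[fun ω => Y ω ^ 2 | m]) ω) := Real.add_one_le_exp _

end CondExp

section MartingaleDifference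

variable {Ω : Type*} {m0 : MeasurableSpace Ω}

/-- `X 1, X 2, …` is a martingale difference sequence for the filtration `ℱ`. The sequence starts
at index `1`; `X 0` is unconstrained. -/
structure IsMartingaleDifference (X : ℕ → Ω → ℝ) (ℱ : Filtration ℕ m0) (μ : Measure Ω) : Prop where
  stronglyMeasurable : ∀ n, StronglyMeasurable[ℱ (n + 1)] (X (n + 1))
  integrable : ∀ n, Integrable (X (n + 1)) μ
  condExp_ae_eq_zero : ∀ n, μ[X (n + 1) | ℱ n] =ᵐ[μ] 0

/-- The predictable quadratic variation `∑ t ≤ n, E[X t ² | ℱ (t - 1)]` of the martingale with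
increments `X 1, X 2, …`. -/
noncomputable def predictableQuadVar (X : ℕ → Ω → ℝ) (ℱ : Filtration ℕ m0) (μ : Measure Ω)
    (n : ℕ) (ω : Ω) : ℝ :=
  ∑ t ∈ Icc 1 n, (μ[fun ω => X t ω ^ 2 | ℱ (t - 1)]) ω

/-- Freedman's exponential process `exp (l * S n - ψ(l) * V n)`, where `S` is the martingale with
increments `X` and `V` is its predictable quadratic variation. -/
noncomputable def freedmanProcess (X : ℕ → Ω → ℝ) (ℱ : Filtration ℕ m0) (μ : Measure Ω) (c l : ℝ)
    (n : ℕ) (ω : Ω) : ℝ :=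
  Real.exp (l * ∑ t ∈ Icc 1 n, X t ω - bernsteinRate c l * predictableQuadVar X ℱ μ n ω)

variable {μ : Measure Ω} {ℱ : Filtration ℕ m0} {X : ℕ → Ω → ℝ} {c l : ℝ}

lemma IsMartingaleDifference.neg (hX : IsMartingaleDifference X ℱ μ) :
    IsMartingaleDifference (-X) ℱ μ where
  stronglyMeasurable n := (hX.stronglyMeasurable n).neg
  integrable n := (hX.integrable n).neg
  condExp_ae_eq_zero n := by
    filter_upwards [condExp_neg (μ := μ) (X (n + 1)) (ℱ n), hX.condExp_ae_eq_zero n] with ω hneg h0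
    simp [hneg, h0]

lemma predictableQuadVar_succ (n : ℕ) (ω : Ω) : predictableQuadVar X ℱ μ (n + 1) ω =
    predictableQuadVar X ℱ μ n ω + (μ[fun ω => X (n + 1) ω ^ 2 | ℱ n]) ω :=
  sum_Icc_succ_top (Nat.le_add_left 1 n) _

lemma predictableQuadVar_neg : predictableQuadVar (-X) ℱ μ = predictableQuadVar X ℱ μ := by
  ext n ω
  simp [predictableQuadVar]

lemma stronglyMeasurable_predictableQuadVar (n : ℕ) :
    StronglyMeasurable[ℱ n] (predictableQuadVar X ℱ μ n) :=
  Finset.stronglyMeasurable_fun_sum _ fun t ht =>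
    stronglyMeasurable_condExp.mono (ℱ.mono ((t.sub_le 1).trans (mem_Icc.mp ht).2))

lemma predictableQuadVar_nonneg (n : ℕ) : ∀ᵐ ω ∂μ, 0 ≤ predictableQuadVar X ℱ μ n ω := by
  have hnonneg : ∀ᵐ ω ∂μ, ∀ t, 0 ≤ (μ[fun ω => X t ω ^ 2 | ℱ (t - 1)]) ω :=
    ae_all_iff.mpr fun t => condExp_nonneg (ae_of_all _ fun ω => sq_nonneg (X t ω))
  filter_upwards [hnonneg] with ω hω
  exact sum_nonneg fun t _ => hω t

lemma freedmanProcess_zero (ω : Ω) : freedmanProcess X ℱ μ c l 0 ω = 1 := by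
  simp [freedmanProcess, predictableQuadVar]

lemma freedmanProcess_succ (n : ℕ) (ω : Ω) : freedmanProcess X ℱ μ c l (n + 1) ω =
    freedmanProcess X ℱ μ c l n ω *
      Real.exp (-(bernsteinRate c l * (μ[fun ω => X (n + 1) ω ^ 2 | ℱ n]) ω)) *
      Real.exp (l * X (n + 1) ω) := by
  rw [freedmanProcess, freedmanProcess, ← Real.exp_add, ← Real.exp_add, predictableQuadVar_succ,
    sum_Icc_succ_top (Nat.le_add_left 1 n)]
  ring_nf

lemma IsMartingaleDifference.stronglyMeasurable_sum (hX : IsMartingaleDifference X ℱ μ) (n : ℕ) :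
    StronglyMeasurable[ℱ n] fun ω => ∑ t ∈ Icc 1 n, X t ω := by
  refine Finset.stronglyMeasurable_fun_sum _ fun t ht => ?_
  obtain ⟨ht1, htn⟩ := mem_Icc.mp ht
  obtain ⟨k, rfl⟩ := Nat.exists_eq_add_of_le' ht1
  exact (hX.stronglyMeasurable k).mono (ℱ.mono htn)

lemma IsMartingaleDifference.stronglyAdapted_freedmanProcess
    (hX : IsMartingaleDifference X ℱ μ) : StronglyAdapted ℱ (freedmanProcess X ℱ μ c l) :=
  fun n => Real.continuous_exp.comp_stronglyMeasurable
    (((hX.stronglyMeasurable_sum n).const_mul l).sub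
      ((stronglyMeasurable_predictableQuadVar n).const_mul (bernsteinRate c l)))

lemma IsMartingaleDifference.integrable_freedmanProcess [IsFiniteMeasure μ]
    (hX : IsMartingaleDifference X ℱ μ) (hXc : ∀ n, ∀ᵐ ω ∂μ, X (n + 1) ω ≤ c) (hl : 0 ≤ l)
    (hlc : l * c < 3) (n : ℕ) : Integrable (freedmanProcess X ℱ μ c l n) μ := by
  refine .of_bound ((hX.stronglyAdapted_freedmanProcess n).mono (ℱ.le n)).aestronglyMeasurable
    (Real.exp (l * (n * c))) ?_
  filter_upwards [ae_all_iff.mpr hXc, predictableQuadVar_nonneg n] with ω hω hV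
  have hsum : ∑ t ∈ Icc 1 n, X t ω ≤ n * c := by
    refine (sum_le_card_nsmul _ _ c fun t ht => ?_).trans_eq (by simp)
    obtain ⟨k, rfl⟩ := Nat.exists_eq_add_of_le' (mem_Icc.mp ht).1
    exact hω k
  rw [freedmanProcess, Real.norm_of_nonneg (Real.exp_nonneg _)]
  gcongr
  exact (sub_le_self _ (mul_nonneg (bernsteinRate_nonneg hlc) hV)).trans (by gcongr)

lemma IsMartingaleDifference.condExp_freedmanProcess_succ_le [IsFiniteMeasure μ]
    (hX : IsMartingaleDifference X ℱ μ) (hX2 : ∀ n, Integrable (fun ω => X (n + 1) ω ^ 2) μ)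
    (hXc : ∀ n, ∀ᵐ ω ∂μ, X (n + 1) ω ≤ c) (hc : 0 ≤ c) (hl : 0 ≤ l) (hlc : l * c < 3) (n : ℕ) :
    μ[freedmanProcess X ℱ μ c l (n + 1) | ℱ n] ≤ᵐ[μ] freedmanProcess X ℱ μ c l n := by
  set v := μ[fun ω => X (n + 1) ω ^ 2 | ℱ n]
  set past : Ω → ℝ := fun ω =>
    freedmanProcess X ℱ μ c l n ω * Real.exp (-(bernsteinRate c l * v ω))
  have hsucc : freedmanProcess X ℱ μ c l (n + 1) = past * fun ω => Real.exp (l * X (n + 1) ω) :=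
    funext (freedmanProcess_succ n)
  have hpast : StronglyMeasurable[ℱ n] past :=
    (hX.stronglyAdapted_freedmanProcess n).mul
      (Real.continuous_exp.comp_stronglyMeasurable
        (stronglyMeasurable_condExp.const_mul (bernsteinRate c l)).neg)
  have hpull : μ[freedmanProcess X ℱ μ c l (n + 1) | ℱ n] =ᵐ[μ]
      past * μ[fun ω => Real.exp (l * X (n + 1) ω) | ℱ n] := by
    rw [hsucc]
    refine condExp_mul_of_stronglyMeasurable_left hpast ?_
      (integrable_exp_mul_of_ae_le (hX.integrable n).aestronglyMeasurable hl (hXc n))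
    rw [← hsucc]
    exact hX.integrable_freedmanProcess hXc hl hlc (n + 1)
  filter_upwards [hpull, condExp_exp_mul_le_exp_bernsteinRate_mul (ℱ.le n) (hX.integrable n)
    (hX2 n) (hX.condExp_ae_eq_zero n) (hXc n) hc hl hlc] with ω hω hmgf
  calc (μ[freedmanProcess X ℱ μ c l (n + 1) | ℱ n]) ω
      = past ω * (μ[fun ω => Real.exp (l * X (n + 1) ω) | ℱ n]) ω := hω
    _ ≤ past ω * Real.exp (bernsteinRate c l * v ω) :=
        mul_le_mul_of_nonneg_left hmgf (mul_nonneg (Real.exp_nonneg _) (Real.exp_nonneg _))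
    _ = freedmanProcess X ℱ μ c l n ω := by
        rw [mul_assoc, ← Real.exp_add, neg_add_cancel, Real.exp_zero, mul_one]

theorem IsMartingaleDifference.supermartingale_freedmanProcess [IsFiniteMeasure μ]
    (hX : IsMartingaleDifference X ℱ μ) (hX2 : ∀ n, Integrable (fun ω => X (n + 1) ω ^ 2) μ)
    (hXc : ∀ n, ∀ᵐ ω ∂μ, X (n + 1) ω ≤ c) (hc : 0 ≤ c) (hl : 0 ≤ l) (hlc : l * c < 3) :
    Supermartingale (freedmanProcess X ℱ μ c l) ℱ μ :=
  supermartingale_nat hX.stronglyAdapted_freedmanProcess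
    (hX.integrable_freedmanProcess hXc hl hlc)
    (hX.condExp_freedmanProcess_succ_le hX2 hXc hc hl hlc)

section Tail

variable [IsProbabilityMeasure μ]

lemma IsMartingaleDifference.integral_freedmanProcess_le_one
    (hX : IsMartingaleDifference X ℱ μ) (hX2 : ∀ n, Integrable (fun ω => X (n + 1) ω ^ 2) μ)
    (hXc : ∀ n, ∀ᵐ ω ∂μ, X (n + 1) ω ≤ c) (hc : 0 ≤ c) (hl : 0 ≤ l) (hlc : l * c < 3) (n : ℕ) :
    ∫ ω, freedmanProcess X ℱ μ c l n ω ∂μ ≤ 1 := by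
  have hle := (hX.supermartingale_freedmanProcess hX2 hXc hc hl hlc).setIntegral_le
    n.zero_le MeasurableSet.univ
  simpa [freedmanProcess_zero] using hle

lemma IsMartingaleDifference.measureReal_le_sum_le_exp_neg
    (hX : IsMartingaleDifference X ℱ μ) (hX2 : ∀ n, Integrable (fun ω => X (n + 1) ω ^ 2) μ)
    (hXc : ∀ n, ∀ᵐ ω ∂μ, X (n + 1) ω ≤ c) (hc : 0 ≤ c) (hl : 0 ≤ l) (hlc : l * c < 3) (b F : ℝ)
    (n : ℕ) :
    μ.real {ω | b ≤ ∑ t ∈ Icc 1 n, X t ω ∧ predictableQuadVar X ℱ μ n ω ≤ F} ≤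
      Real.exp (-(l * b - bernsteinRate c l * F)) := by
  set a := l * b - bernsteinRate c l * F
  have hsub : {ω | b ≤ ∑ t ∈ Icc 1 n, X t ω ∧ predictableQuadVar X ℱ μ n ω ≤ F} ⊆
      {ω | Real.exp a ≤ freedmanProcess X ℱ μ c l n ω} := by
    rintro ω ⟨hS, hV⟩
    exact Real.exp_le_exp.mpr (sub_le_sub (mul_le_mul_of_nonneg_left hS hl)
      (mul_le_mul_of_nonneg_left hV (bernsteinRate_nonneg hlc)))
  have hmarkov := mul_meas_ge_le_integral_of_nonneg (ae_of_all μ fun ω => Real.exp_nonneg _)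
    (hX.integrable_freedmanProcess hXc hl hlc n) (Real.exp a)
  rw [Real.exp_neg, ← one_div, le_div_iff₀' (Real.exp_pos a)]
  calc Real.exp a * μ.real {ω | b ≤ ∑ t ∈ Icc 1 n, X t ω ∧ predictableQuadVar X ℱ μ n ω ≤ F}
      ≤ Real.exp a * μ.real {ω | Real.exp a ≤ freedmanProcess X ℱ μ c l n ω} :=
        mul_le_mul_of_nonneg_left (measureReal_mono hsub) (Real.exp_nonneg a)
    _ ≤ ∫ ω, freedmanProcess X ℱ μ c l n ω ∂μ := hmarkov
    _ ≤ 1 := hX.integral_freedmanProcess_le_one hX2 hXc hc hl hlc n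

theorem IsMartingaleDifference.measure_le_sum_le_exp_neg_sq_div
    (hX : IsMartingaleDifference X ℱ μ) (hX2 : ∀ n, Integrable (fun ω => X (n + 1) ω ^ 2) μ)
    (hXc : ∀ n, ∀ᵐ ω ∂μ, X (n + 1) ω ≤ c) (hc : 0 ≤ c) {b F : ℝ} (hb : 0 ≤ b) (hF : 0 < F)
    (n : ℕ) :
    μ {ω | b ≤ ∑ t ∈ Icc 1 n, X t ω ∧ predictableQuadVar X ℱ μ n ω ≤ F} ≤
      ENNReal.ofReal (Real.exp (-(b ^ 2) / (2 * F + 2 * c * b / 3))) := by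
  have hD : 0 < F + c * b / 3 := by positivity
  have hlc : b / (F + c * b / 3) * c < 3 := by
    rw [div_mul_eq_mul_div, div_lt_iff₀ hD]
    linarith
  rw [← ofReal_measureReal, neg_div, ← mul_sub_bernsteinRate_mul hF.ne' hD.ne']
  exact ENNReal.ofReal_le_ofReal
    (hX.measureReal_le_sum_le_exp_neg hX2 hXc hc (div_nonneg hb hD.le) hlc b F n)

theorem freedman_inequality_general (hX : IsMartingaleDifference X ℱ μ)
    (hbdd : ∀ n, ∀ᵐ ω ∂μ, |X (n + 1) ω| ≤ c) {σsq : ℕ → Ω → ℝ}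
    (hσsq : ∀ n, σsq (n + 1) =ᵐ[μ] μ[fun ω => X (n + 1) ω ^ 2 | ℱ n])
    {b F : ℝ} (hb : 0 ≤ b) (hF : 0 < F) (T : ℕ) :
    μ {ω | b ≤ |∑ t ∈ Icc 1 T, X t ω| ∧ ∑ t ∈ Icc 1 T, σsq t ω ≤ F}
      ≤ ENNReal.ofReal (2 * Real.exp (-(b ^ 2) / (2 * F + 2 * c * b / 3))) := by
  have hc : 0 ≤ c := let ⟨ω, hω⟩ := (hbdd 0).exists; (abs_nonneg (X 1 ω)).trans hω
  have hX2 (n : ℕ) : Integrable (fun ω => X (n + 1) ω ^ 2) μ := by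
    refine .of_bound ((hX.integrable n).aestronglyMeasurable.pow 2) (c ^ 2) ?_
    filter_upwards [hbdd n] with ω hω
    simpa using pow_le_pow_left₀ (abs_nonneg _) hω 2
  have hupper := hX.measure_le_sum_le_exp_neg_sq_div hX2
    (fun n => (hbdd n).mono fun ω => le_of_abs_le) hc hb hF T
  have hlower := hX.neg.measure_le_sum_le_exp_neg_sq_div (c := c) (by simpa using hX2)
    (fun n => (hbdd n).mono fun ω h => neg_le.mp (neg_le_of_abs_le h)) hc hb hF T
  have hV : ∀ᵐ ω ∂μ, ∑ t ∈ Icc 1 T, σsq t ω = predictableQuadVar X ℱ μ T ω := by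
    filter_upwards [ae_all_iff.mpr hσsq] with ω hω
    refine sum_congr rfl fun t ht => ?_
    obtain ⟨k, rfl⟩ := Nat.exists_eq_add_of_le' (mem_Icc.mp ht).1
    exact hω k
  rw [two_mul, ENNReal.ofReal_add (Real.exp_nonneg _) (Real.exp_nonneg _)]
  refine (measure_mono_ae ?_).trans ((measure_union_le _ _).trans (add_le_add hupper hlower))
  filter_upwards [hV] with ω hω
  rintro ⟨hS, hσF⟩
  rw [hω] at hσF
  rw [predictableQuadVar_neg]
  exact (le_abs.mp hS).imp (⟨·, hσF⟩) fun h => ⟨by simpa using h, hσF⟩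

end Tail

end MartingaleDifference

section NaturalFiltration

variable {Ω : Type*} {m0 : MeasurableSpace Ω} {X : ℕ → Ω → ℝ}

/-- The filtration generated by `X 1, X 2, …`. Unlike in `MeasureTheory.Filtration.natural`, the
variable `X 0` is left out, so that the σ-algebra at time `0` is trivial. -/
def naturalFiltrationFromOne (X : ℕ → Ω → ℝ) (hX : ∀ t, Measurable (X t)) : Filtration ℕ m0 where
  seq t := ⨆ s ∈ Set.Icc 1 t, MeasurableSpace.comap (X s) inferInstance
  mono' _ _ hst := biSup_mono fun _ hk => ⟨hk.1, hk.2.trans hst⟩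
  le' _ := iSup₂_le fun s _ => (hX s).comap_le

lemma stronglyMeasurable_naturalFiltrationFromOne (hX : ∀ t, Measurable (X t)) (n : ℕ) :
    StronglyMeasurable[naturalFiltrationFromOne X hX (n + 1)] (X (n + 1)) :=
  (measurable_iff_comap_le.mpr (le_biSup (fun s => MeasurableSpace.comap (X s) inferInstance)
    (Set.mem_Icc.mpr ⟨n.succ_pos, le_rfl⟩))).stronglyMeasurable

end NaturalFiltration

/-- Freedman's inequality for bounded real-valued martingale difference sequences
with respect to their natural filtration. -/
theorem freedman_inequality
    {Ω : Type*} {m0 : MeasurableSpace Ω} (μ : Measure Ω) [IsProbabilityMeasure μ]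
    (X : ℕ → Ω → ℝ) (hXmeas : ∀ t, Measurable (X t))
    (c : ℝ) (hc : 0 < c)
    (hbdd : ∀ t, 1 ≤ t → ∀ᵐ ω ∂μ, |X t ω| ≤ c)
    (G : ℕ → MeasurableSpace Ω)
    (hG : ∀ t, G t = ⨆ s ∈ Set.Icc 1 t, MeasurableSpace.comap (X s) inferInstance)
    (hmds : ∀ t, 1 ≤ t → μ[X t | G (t - 1)] =ᵐ[μ] 0)
    (σsq : ℕ → Ω → ℝ)
    (hσsq : ∀ t, 1 ≤ t → σsq t =ᵐ[μ] μ[fun ω => (X t ω) ^ 2 | G (t - 1)])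
    (b F : ℝ) (hb : 0 < b) (hF : 0 < F) (T : ℕ) (hT : 1 ≤ T) :
    μ {ω | b < |∑ t ∈ Icc 1 T, X t ω| ∧ ∑ t ∈ Icc 1 T, σsq t ω ≤ F}
      ≤ ENNReal.ofReal (2 * Real.exp (-(b ^ 2) / (2 * F + 2 * c * b / 3))) := by
  obtain rfl : G = naturalFiltrationFromOne X hXmeas := funext hG
  have hX : IsMartingaleDifference X (naturalFiltrationFromOne X hXmeas) μ :=
    { stronglyMeasurable := stronglyMeasurable_naturalFiltrationFromOne hXmeas
      integrable := fun n =>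
        .of_bound (hXmeas (n + 1)).aestronglyMeasurable c (hbdd (n + 1) n.succ_pos)
      condExp_ae_eq_zero := fun n => hmds (n + 1) n.succ_pos }
  refine (measure_mono ?_).trans (freedman_inequality_general hX
    (fun n => hbdd (n + 1) n.succ_pos) (fun n => hσsq (n + 1) n.succ_pos) hb.le hF T)
  exact fun ω ⟨hS, hV⟩ => ⟨hS.le, hV⟩
end

section
/- Let f : ℝ^d → ℝ be convex, differentiable and L-smooth with a minimizer x* and f* = f(x*). Fix a step size η_t with 0 < η_t ≤ 1/(4L), a point x_t ∈ ℝ^d, a vector g̃_t ∈ ℝ^d, and set x_{t+1} = x_t − η_t·g̃_t, θ_t = g̃_t − ∇f(x_t), and Δ_t = f(x_t) − f*. Then η_t·Δ_t ≤ ‖x_t − x*‖² − ‖x_{t+1} − x*‖² + 2·η_t²·‖θ_t‖² − 2·η_t·⟨θ_t, x_t − x*⟩. -/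
open scoped RealInnerProductSpace

/-!
Expand `‖x_{t+1} - x*‖²` with `g̃_t = ∇f(x_t) + θ_t`. The first-order condition at `x_t` turns
`-2 η_t ⟨∇f(x_t), x_t - x*⟩` into `-2 η_t Δ_t`, while the quadratic term costs at most
`2 η_t² ‖θ_t‖² + 2 η_t² ‖∇f(x_t)‖²`. Smoothness bounds `‖∇f(x_t)‖²` by `2 L Δ_t`, because a gradient
step of length `1 / L` cannot go below `f*`; since `4 L η_t ≤ 1`, the last term uses up only
`η_t Δ_t` of the gain `2 η_t Δ_t`.
-/

section NormedSpace

variable {E F : Type*} [NormedAddCommGroup E] [NormedSpace ℝ E]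
  [NormedAddCommGroup F] [NormedSpace ℝ F] {s : Set E} {x y : E}

theorem add_fderiv_le_of_convexOn {f : E → ℝ} {f' : E →L[ℝ] ℝ} (hconv : ConvexOn ℝ s f)
    (hf : HasFDerivWithinAt f f' s x) (hx : x ∈ s) (hy : y ∈ s) :
    f x + f' (y - x) ≤ f y := by
  let ℓ : ℝ →ᵃ[ℝ] E := AffineMap.lineMap x y
  have hℓ0 : ℓ 0 = x := AffineMap.lineMap_apply_zero x y
  have hℓ1 : ℓ 1 = y := AffineMap.lineMap_apply_one x y
  have hderiv : HasDerivWithinAt (f ∘ ℓ) (f' (y - x)) (ℓ ⁻¹' s) 0 :=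
    HasFDerivWithinAt.comp_hasDerivWithinAt 0 (hℓ0.symm ▸ hf) AffineMap.hasDerivWithinAt_lineMap
      (Set.mapsTo_preimage ℓ s)
  have hslope := (hconv.comp_affineMap ℓ).le_slope_of_hasDerivWithinAt
    (by simpa [hℓ0] using hx) (by simpa [hℓ1] using hy) one_pos hderiv
  simp only [slope_def_field, Function.comp_apply, hℓ0, hℓ1, sub_zero, div_one] at hslope
  linarith

theorem norm_sub_sub_fderiv_le_of_lipschitz {f : E → F} {f' : E → E →L[ℝ] F} {L : ℝ}
    (hs : Convex ℝ s) (hf : ∀ z ∈ s, HasFDerivWithinAt f (f' z) s z)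
    (hlip : ∀ z ∈ s, ‖f' z - f' x‖ ≤ L * ‖z - x‖) (hx : x ∈ s) (hy : y ∈ s) :
    ‖f y - f x - f' x (y - x)‖ ≤ L / 2 * ‖y - x‖ ^ 2 := by
  let ℓ : ℝ → E := AffineMap.lineMap x y
  have hℓ : Set.MapsTo ℓ (Set.Icc 0 1) s := hs.mapsTo_lineMap hx hy
  let r : ℝ → F := fun t => f (ℓ t) - f x - t • f' x (y - x)
  have hr : ∀ t ∈ Set.Icc (0 : ℝ) 1,
      HasDerivWithinAt r ((f' (ℓ t) - f' x) (y - x)) (Set.Icc 0 1) t := fun t ht => by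
    exact ((((hf _ (hℓ ht)).comp_hasDerivWithinAt t
      AffineMap.hasDerivWithinAt_lineMap hℓ).sub_const (f x)).sub
        ((hasDerivWithinAt_id t _).smul_const (f' x (y - x)))).congr_deriv (by simp)
  have hbound : ∀ t ∈ Set.Ico (0 : ℝ) 1,
      ‖(f' (ℓ t) - f' x) (y - x)‖ ≤ L / 2 * ‖y - x‖ ^ 2 * (2 * t) := fun t ht => by
    have hdist : ‖ℓ t - x‖ = t * ‖y - x‖ := by
      simp [ℓ, AffineMap.lineMap_apply, norm_smul, abs_of_nonneg ht.1]
    calc ‖(f' (ℓ t) - f' x) (y - x)‖ ≤ L * ‖ℓ t - x‖ * ‖y - x‖ :=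
          ContinuousLinearMap.le_of_opNorm_le _ (hlip _ (hℓ (Set.Ico_subset_Icc_self ht))) _
      _ = L / 2 * ‖y - x‖ ^ 2 * (2 * t) := by rw [hdist]; ring
  have hfence := image_norm_le_of_norm_deriv_right_le_deriv_boundary
    (fun t ht => (hr t ht).continuousWithinAt)
    (fun t ht => (hr t (Set.Ico_subset_Icc_self ht)).mono_of_mem_nhdsWithin
      (Icc_mem_nhdsGE_of_mem ht))
    (B := fun t => L / 2 * ‖y - x‖ ^ 2 * t ^ 2) (by simp [r, ℓ])
    (fun t => by simpa using (hasDerivAt_pow 2 t).const_mul (L / 2 * ‖y - x‖ ^ 2)) hbound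
  simpa [r, ℓ] using hfence (Set.right_mem_Icc.2 zero_le_one)

end NormedSpace

theorem norm_add_sq_le_two_mul {E : Type*} [SeminormedAddGroup E] (a b : E) :
    ‖a + b‖ ^ 2 ≤ 2 * (‖a‖ ^ 2 + ‖b‖ ^ 2) :=
  (pow_le_pow_left₀ (norm_nonneg _) (norm_add_le a b) 2).trans add_sq_le

theorem norm_sub_smul_sub_sq {E : Type*} [SeminormedAddCommGroup E] [InnerProductSpace ℝ E]
    (x u g : E) (η : ℝ) :
    ‖x - η • g - u‖ ^ 2 = ‖x - u‖ ^ 2 - 2 * η * ⟪g, x - u⟫ + η ^ 2 * ‖g‖ ^ 2 := by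
  rw [sub_right_comm, norm_sub_sq_real, real_inner_smul_right, real_inner_comm, norm_smul, mul_pow,
    Real.norm_eq_abs, sq_abs]
  ring

theorem two_mul_gap_le_of_inexact_subgradient_step {E : Type*} [SeminormedAddCommGroup E]
    [InnerProductSpace ℝ E] {f : E → ℝ} {x u v : E} (hv : f x + ⟪v, u - x⟫ ≤ f u) {η : ℝ}
    (hη : 0 ≤ η) (θ : E) :
    2 * η * (f x - f u) ≤ ‖x - u‖ ^ 2 - ‖x - η • (v + θ) - u‖ ^ 2
      + 2 * η ^ 2 * (‖v‖ ^ 2 + ‖θ‖ ^ 2) - 2 * η * ⟪θ, x - u⟫ := by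
  have hgap : f x - f u ≤ ⟪v, x - u⟫ := by
    rw [← neg_sub x u, inner_neg_right] at hv
    linarith
  have hgap_mul := mul_le_mul_of_nonneg_left hgap hη
  have hnorm_mul := mul_le_mul_of_nonneg_left (norm_add_sq_le_two_mul v θ) (sq_nonneg η)
  rw [norm_sub_smul_sub_sq, inner_add_left]
  linarith

section Gradient

variable {E : Type*} [NormedAddCommGroup E] [InnerProductSpace ℝ E] [CompleteSpace E]
  {f : E → ℝ} {L : ℝ} {x : E}

theorem le_add_inner_gradient_add_sq (hf : Differentiable ℝ f)
    (hlip : ∀ z, ‖gradient f z - gradient f x‖ ≤ L * ‖z - x‖) (y : E) :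
    f y ≤ f x + ⟪gradient f x, y - x⟫ + L / 2 * ‖y - x‖ ^ 2 := by
  have hlip' (z : E) : ‖fderiv ℝ f z - fderiv ℝ f x‖ ≤ L * ‖z - x‖ := by
    simpa only [← toDual_gradient, ← map_sub, LinearIsometryEquiv.norm_map] using hlip z
  have htaylor := norm_sub_sub_fderiv_le_of_lipschitz convex_univ
    (fun z _ => (hf z).hasFDerivAt.hasFDerivWithinAt) (fun z _ => hlip' z)
    (Set.mem_univ x) (Set.mem_univ y)
  rw [inner_gradient_left]
  linarith [(Real.le_norm_self _).trans htaylor]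

theorem norm_gradient_sq_le_two_mul_gap (hf : Differentiable ℝ f) (hL : 0 < L)
    (hlip : ∀ z, ‖gradient f z - gradient f x‖ ≤ L * ‖z - x‖) {m : ℝ} (hm : ∀ y, m ≤ f y) :
    ‖gradient f x‖ ^ 2 ≤ 2 * L * (f x - m) := by
  have hstep := (hm _).trans (le_add_inner_gradient_add_sq hf hlip (x - L⁻¹ • gradient f x))
  rw [sub_sub_cancel_left, inner_neg_right, real_inner_smul_right, real_inner_self_eq_norm_sq,
    norm_neg, norm_smul, Real.norm_of_nonneg (inv_nonneg.2 hL.le)] at hstep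
  field_simp at hstep
  linarith

theorem convex_per_iteration_bound_general (hf : Differentiable ℝ f) (hL : 0 < L)
    (hlip : ∀ z, ‖gradient f z - gradient f x‖ ≤ L * ‖z - x‖) {xstar : E}
    (hmin : ∀ y, f xstar ≤ f y) (hfirst : f x + ⟪gradient f x, xstar - x⟫ ≤ f xstar)
    {η : ℝ} (hη0 : 0 ≤ η) (hη : η ≤ 1 / (4 * L)) (g : E) :
    η * (f x - f xstar) ≤
      ‖x - xstar‖ ^ 2 - ‖x - η • g - xstar‖ ^ 2 + 2 * η ^ 2 * ‖g - gradient f x‖ ^ 2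
        - 2 * η * ⟪g - gradient f x, x - xstar⟫ := by
  have hstep := two_mul_gap_le_of_inexact_subgradient_step hfirst hη0 (g - gradient f x)
  rw [add_sub_cancel] at hstep
  have hgrad : 2 * η ^ 2 * ‖gradient f x‖ ^ 2 ≤ η * (f x - f xstar) :=
    calc 2 * η ^ 2 * ‖gradient f x‖ ^ 2 ≤ 2 * η ^ 2 * (2 * L * (f x - f xstar)) := by
          gcongr
          exact norm_gradient_sq_le_two_mul_gap hf hL hlip hmin
      _ = η * (4 * L) * (η * (f x - f xstar)) := by ring
      _ ≤ η * (f x - f xstar) := mul_le_of_le_one_left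
          (mul_nonneg hη0 (sub_nonneg.2 (hmin x))) ((le_div_iff₀ (by positivity)).1 hη)
  linarith

end Gradient

/-- Per-iteration inequality for (clipped) SGD on convex smooth objectives. -/
theorem convex_per_iteration_bound
    {d : ℕ} (f : EuclideanSpace ℝ (Fin d) → ℝ)
    (L : ℝ) (hL : 0 < L)
    (hconv : ConvexOn ℝ Set.univ f)
    (hdiff : Differentiable ℝ f)
    (hsmooth : ∀ x y, ‖gradient f x - gradient f y‖ ≤ L * ‖x - y‖)
    (xstar : EuclideanSpace ℝ (Fin d)) (hmin : ∀ y, f xstar ≤ f y)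
    (ηt : ℝ) (hη0 : 0 < ηt) (hη : ηt ≤ 1 / (4 * L))
    (xt gt xt1 : EuclideanSpace ℝ (Fin d)) (hupdate : xt1 = xt - ηt • gt)
    (θt : EuclideanSpace ℝ (Fin d)) (hθ : θt = gt - gradient f xt) :
    ηt * (f xt - f xstar) ≤
      ‖xt - xstar‖ ^ 2 - ‖xt1 - xstar‖ ^ 2 + 2 * ηt ^ 2 * ‖θt‖ ^ 2
        - 2 * ηt * ⟪θt, xt - xstar⟫ := by
  have hfirst : f xt + ⟪gradient f xt, xstar - xt⟫ ≤ f xstar := by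
    simpa only [inner_gradient_left] using add_fderiv_le_of_convexOn hconv
      (hdiff xt).hasFDerivAt.hasFDerivWithinAt (Set.mem_univ xt) (Set.mem_univ xstar)
  subst hupdate hθ
  exact convex_per_iteration_bound_general hdiff hL (hsmooth · xt) hmin hfirst hη0.le hη gt
end

section
/- Let f : ℝ^d → ℝ be convex, differentiable and L-smooth with a minimizer x* and f* = f(x*). Let η > 0 with η ≤ 1/(4L), let (g̃_t)_{t≥1} be vectors in ℝ^d, and define iterates x_{t+1} = x_t − η·g̃_t from some x_1 ∈ ℝ^d, with θ_t = g̃_t − ∇f(x_t) and Δ_t = f(x_t) − f*. Then for every k ≥ 1: ∑_{t=1}^{k} η·Δ_t ≤ ‖x_1 − x*‖² − ‖x_{k+1} − x*‖² + 2·∑_{t=1}^{k} η²·‖θ_t‖² − 2·∑_{t=1}^{k} η·⟨θ_t, x_t − x*⟩. -/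
open scoped RealInnerProductSpace
open Finset

/-!
Expanding `‖x - η • g - z‖²` with `g = ∇f x + θ` gives the first-order term `-2η⟪∇f x, x - z⟫`,
which convexity bounds by `-2η (f x - f z)`, and the second-order term `η² ‖g‖²`, at most
`2η² ‖θ‖² + 2η² ‖∇f x‖²`. Since `z` is a minimizer, smoothness gives the self-bounding inequality
`‖∇f x‖² ≤ 2L (f x - f z)`, so for `η ≤ 1 / (4L)` the gradient part of the second-order term costs
only half of the first-order gain. Summing over the steps telescopes the squared distances.
-/

section Normed

variable {E G : Type*} [NormedAddCommGroup E] [NormedSpace ℝ E]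
  [NormedAddCommGroup G] [NormedSpace ℝ G]

theorem add_fderiv_apply_sub_le_of_convexOn {s : Set E} {f : E → ℝ} {f' : E →L[ℝ] ℝ} {x y : E}
    (hf : ConvexOn ℝ s f) (hx : x ∈ s) (hy : y ∈ s) (hf' : HasFDerivWithinAt f f' s x) :
    f x + f' (y - x) ≤ f y := by
  let γ : ℝ →ᵃ[ℝ] E := AffineMap.lineMap x y
  have hderiv : HasDerivWithinAt (f ∘ γ) (f' (y - x)) (γ ⁻¹' s) 0 :=
    hf'.comp_hasDerivWithinAt_of_eq 0 AffineMap.hasDerivWithinAt_lineMap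
      (Set.mapsTo_preimage γ s) (AffineMap.lineMap_apply_zero x y).symm
  have hslope : f' (y - x) ≤ slope (f ∘ γ) 0 1 :=
    (hf.comp_affineMap γ).le_slope_of_hasDerivWithinAt (by simpa [γ] using hx)
      (by simpa [γ] using hy) zero_lt_one hderiv
  have hslope_eq : slope (f ∘ γ) 0 1 = f y - f x := by simp [slope_def_field, γ]
  linarith

theorem norm_sub_sub_fderiv_le_of_lipschitzWith {K : NNReal} {f : E → G} (hf : Differentiable ℝ f)
    (hK : LipschitzWith K (fderiv ℝ f)) (x v : E) :
    ‖f (x + v) - f x - fderiv ℝ f x v‖ ≤ K / 2 * ‖v‖ ^ 2 := by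
  let r : ℝ → G := fun s ↦ f (x + s • v) - f x - s • fderiv ℝ f x v
  have hr (s : ℝ) : HasDerivAt r ((fderiv ℝ f (x + s • v) - fderiv ℝ f x) v) s := by
    have hline : HasDerivAt (fun s : ℝ ↦ x + s • v) v s := by
      simpa using ((hasDerivAt_id s).smul_const v).const_add x
    have hlin : HasDerivAt (fun s : ℝ ↦ s • fderiv ℝ f x v) (fderiv ℝ f x v) s := by
      simpa using (hasDerivAt_id s).smul_const (fderiv ℝ f x v)
    exact (((hf _).hasFDerivAt.comp_hasDerivAt s hline).sub_const (f x)).sub hlin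
  have hr_deriv_le (s : ℝ) (hs : 0 ≤ s) :
      ‖(fderiv ℝ f (x + s • v) - fderiv ℝ f x) v‖ ≤ K * ‖v‖ ^ 2 * s :=
    calc ‖(fderiv ℝ f (x + s • v) - fderiv ℝ f x) v‖
        ≤ ‖fderiv ℝ f (x + s • v) - fderiv ℝ f x‖ * ‖v‖ := ContinuousLinearMap.le_opNorm _ v
      _ ≤ K * ‖x + s • v - x‖ * ‖v‖ := by gcongr; exact hK.norm_sub_le _ _
      _ = K * ‖v‖ ^ 2 * s := by
        rw [add_sub_cancel_left, norm_smul, Real.norm_of_nonneg hs]; ring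
  have hbound (s : ℝ) : HasDerivAt (fun s ↦ K / 2 * ‖v‖ ^ 2 * s ^ 2) (K * ‖v‖ ^ 2 * s) s := by
    refine ((hasDerivAt_pow 2 s).const_mul (K / 2 * ‖v‖ ^ 2)).congr_deriv ?_
    norm_num
    ring
  have hr_one := image_norm_le_of_norm_deriv_right_le_deriv_boundary (a := 0) (b := 1)
    (fun s _ ↦ (hr s).continuousAt.continuousWithinAt) (fun s _ ↦ (hr s).hasDerivWithinAt)
    (by simp [r]) hbound (fun s hs ↦ hr_deriv_le s hs.1) (Set.right_mem_Icc.2 zero_le_one)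
  simpa [r] using hr_one

theorem norm_fderiv_sq_le_of_lipschitzWith {K : NNReal} {f : E → ℝ} {m : ℝ}
    (hf : Differentiable ℝ f) (hK : LipschitzWith K (fderiv ℝ f)) (hm : ∀ y, m ≤ f y) (x : E) :
    ‖fderiv ℝ f x‖ ^ 2 ≤ 2 * K * (f x - m) := by
  have hgap : 0 ≤ 2 * K * (f x - m) := mul_nonneg (by positivity) (sub_nonneg.2 (hm x))
  -- The quadratic upper model of `f` along `v` stays above `m`, so its discriminant is nonpositive.
  have hdiscrim (v : E) : (fderiv ℝ f x v) ^ 2 ≤ 2 * K * (f x - m) * ‖v‖ ^ 2 := by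
    have hquad (s : ℝ) :
        0 ≤ K / 2 * ‖v‖ ^ 2 * (s * s) + fderiv ℝ f x v * s + (f x - m) := by
      have hmodel := (le_abs_self _).trans (norm_sub_sub_fderiv_le_of_lipschitzWith hf hK x (s • v))
      rw [map_smul, smul_eq_mul, norm_smul, mul_pow, Real.norm_eq_abs, sq_abs] at hmodel
      linarith [hm (x + s • v)]
    have h := discrim_le_zero hquad
    rw [discrim] at h
    linarith
  rw [← Real.le_sqrt (norm_nonneg _) hgap]
  refine ContinuousLinearMap.opNorm_le_bound _ (Real.sqrt_nonneg _) fun v ↦ ?_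
  refine (Real.abs_le_sqrt (hdiscrim v)).trans_eq ?_
  rw [Real.sqrt_mul hgap, Real.sqrt_sq (norm_nonneg v)]

end Normed

theorem inexact_gradient_step_le {F : Type*} [NormedAddCommGroup F] [InnerProductSpace ℝ F]
    {η δ : ℝ} {x z g v : F} (hη : 0 ≤ η) (hinner : δ ≤ ⟪v, x - z⟫)
    (hnorm : 2 * η * ‖v‖ ^ 2 ≤ δ) :
    η * δ ≤ ‖x - z‖ ^ 2 - ‖x - η • g - z‖ ^ 2 + 2 * (η ^ 2 * ‖g - v‖ ^ 2)
      - 2 * (η * ⟪g - v, x - z⟫) := by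
  have hexpand : ‖x - η • g - z‖ ^ 2 =
      ‖x - z‖ ^ 2 - 2 * η * ⟪g - v, x - z⟫ - 2 * η * ⟪v, x - z⟫ + η ^ 2 * ‖g‖ ^ 2 := by
    rw [sub_right_comm, norm_sub_sq_real, real_inner_smul_right, real_inner_comm, norm_smul,
      mul_pow, Real.norm_eq_abs, sq_abs, inner_sub_left]
    ring
  have hsplit : ‖g‖ ^ 2 ≤ 2 * (‖g - v‖ ^ 2 + ‖v‖ ^ 2) :=
    calc ‖g‖ ^ 2 = ‖(g - v) + v‖ ^ 2 := by rw [sub_add_cancel]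
      _ ≤ (‖g - v‖ + ‖v‖) ^ 2 := by gcongr; exact norm_add_le _ _
      _ ≤ 2 * (‖g - v‖ ^ 2 + ‖v‖ ^ 2) := add_sq_le
  have hfirst : η * δ ≤ η * ⟪v, x - z⟫ := by gcongr
  have hsecond : η ^ 2 * ‖g‖ ^ 2 ≤ 2 * (η ^ 2 * ‖g - v‖ ^ 2) + η * δ :=
    calc η ^ 2 * ‖g‖ ^ 2 ≤ η ^ 2 * (2 * (‖g - v‖ ^ 2 + ‖v‖ ^ 2)) := by gcongr
      _ = 2 * (η ^ 2 * ‖g - v‖ ^ 2) + η * (2 * η * ‖v‖ ^ 2) := by ring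
      _ ≤ 2 * (η ^ 2 * ‖g - v‖ ^ 2) + η * δ := by gcongr
  linarith

section Gradient

variable {F : Type*} [NormedAddCommGroup F] [InnerProductSpace ℝ F] [CompleteSpace F] {f : F → ℝ}

theorem sub_le_inner_gradient_of_convexOn {s : Set F} {x z : F} (hf : ConvexOn ℝ s f)
    (hx : x ∈ s) (hz : z ∈ s) (hdiff : DifferentiableAt ℝ f x) :
    f x - f z ≤ ⟪gradient f x, x - z⟫ := by
  have h := add_fderiv_apply_sub_le_of_convexOn hf hx hz hdiff.hasFDerivAt.hasFDerivWithinAt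
  rw [← neg_sub z x, inner_neg_right, inner_gradient_left]
  linarith

theorem norm_gradient_sq_le_of_lipschitzWith {K : NNReal} {m : ℝ} (hf : Differentiable ℝ f)
    (hK : LipschitzWith K (gradient f)) (hm : ∀ y, m ≤ f y) (x : F) :
    ‖gradient f x‖ ^ 2 ≤ 2 * K * (f x - m) := by
  rw [← (InnerProductSpace.toDual ℝ F).isometry.lipschitzWith_iff, toDual_comp_gradient] at hK
  rw [← (InnerProductSpace.toDual ℝ F).norm_map, toDual_gradient]
  exact norm_fderiv_sq_le_of_lipschitzWith hf hK hm x

theorem convex_summed_bound_general {K : NNReal} {z : F} {η : ℕ → ℝ} {x g : ℕ → F}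
    (hf : Differentiable ℝ f) (hK : LipschitzWith K (gradient f)) (hmin : ∀ y, f z ≤ f y)
    (hstar : ∀ y, f y - f z ≤ ⟪gradient f y, y - z⟫)
    (hη0 : ∀ t, 1 ≤ t → 0 ≤ η t) (hη : ∀ t, 1 ≤ t → 4 * K * η t ≤ 1)
    (hupdate : ∀ t, 1 ≤ t → x (t + 1) = x t - η t • g t) (k : ℕ) :
    ∑ t ∈ Icc 1 k, η t * (f (x t) - f z) ≤
      ‖x 1 - z‖ ^ 2 - ‖x (k + 1) - z‖ ^ 2
        + 2 * ∑ t ∈ Icc 1 k, η t ^ 2 * ‖g t - gradient f (x t)‖ ^ 2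
        - 2 * ∑ t ∈ Icc 1 k, η t * ⟪g t - gradient f (x t), x t - z⟫ := by
  have hstep (t : ℕ) (ht : 1 ≤ t) : η t * (f (x t) - f z) ≤
      ‖x t - z‖ ^ 2 - ‖x (t + 1) - z‖ ^ 2 + 2 * (η t ^ 2 * ‖g t - gradient f (x t)‖ ^ 2)
        - 2 * (η t * ⟪g t - gradient f (x t), x t - z⟫) := by
    have hnorm : 2 * η t * ‖gradient f (x t)‖ ^ 2 ≤ f (x t) - f z :=
      calc 2 * η t * ‖gradient f (x t)‖ ^ 2
          ≤ 2 * η t * (2 * K * (f (x t) - f z)) :=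
            mul_le_mul_of_nonneg_left (norm_gradient_sq_le_of_lipschitzWith hf hK hmin (x t))
              (mul_nonneg zero_le_two (hη0 t ht))
        _ = 4 * K * η t * (f (x t) - f z) := by ring
        _ ≤ f (x t) - f z := mul_le_of_le_one_left (sub_nonneg.2 (hmin (x t))) (hη t ht)
    rw [hupdate t ht]
    exact inexact_gradient_step_le (hη0 t ht) (hstar (x t)) hnorm
  induction k with
  | zero => simp
  | succ k ih =>
    simp only [sum_Icc_succ_top (Nat.le_add_left 1 k)]
    linarith [hstep (k + 1) (Nat.le_add_left 1 k)]

end Gradient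

/-- Summed inequality for (clipped) SGD on convex smooth objectives. -/
theorem convex_summed_bound
    {d : ℕ} (f : EuclideanSpace ℝ (Fin d) → ℝ)
    (L : ℝ) (hL : 0 < L)
    (hconv : ConvexOn ℝ Set.univ f)
    (hdiff : Differentiable ℝ f)
    (hsmooth : ∀ x y, ‖gradient f x - gradient f y‖ ≤ L * ‖x - y‖)
    (xstar : EuclideanSpace ℝ (Fin d)) (hmin : ∀ y, f xstar ≤ f y)
    (η : ℝ) (hη0 : 0 < η) (hη : η ≤ 1 / (4 * L))
    (x gt : ℕ → EuclideanSpace ℝ (Fin d))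
    (hupdate : ∀ t, 1 ≤ t → x (t + 1) = x t - η • gt t)
    (θ : ℕ → EuclideanSpace ℝ (Fin d)) (hθ : ∀ t, θ t = gt t - gradient f (x t)) :
    ∀ k, 1 ≤ k →
      ∑ t ∈ Icc 1 k, η * (f (x t) - f xstar) ≤
        ‖x 1 - xstar‖ ^ 2 - ‖x (k + 1) - xstar‖ ^ 2
          + 2 * ∑ t ∈ Icc 1 k, η ^ 2 * ‖θ t‖ ^ 2
          - 2 * ∑ t ∈ Icc 1 k, η * ⟪θ t, x t - xstar⟫ := by
  intro k _
  lift L to NNReal using hL.le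
  have hstep : 4 * L * η ≤ 1 := (le_div_iff₀' (by positivity)).1 hη
  simpa only [hθ] using convex_summed_bound_general hdiff (lipschitzWith_iff_norm_sub_le.2 hsmooth)
    hmin (fun y ↦ sub_le_inner_gradient_of_convexOn hconv trivial trivial (hdiff y))
    (fun _ _ ↦ hη0.le) (fun _ _ ↦ hstep) hupdate k
end

section
/- Let f : ℝ^d → ℝ be differentiable and L-smooth with f* such that f(x) ≥ f* for all x. Fix a step size η_t with 0 < η_t ≤ 1/L, a point x_t ∈ ℝ^d, a vector g̃_t ∈ ℝ^d, and set x_{t+1} = x_t − η_t·g̃_t. Let θ_t = g̃_t − ∇f(x_t), and suppose θ_t = θ_t^u + θ_t^b for vectors θ_t^u, θ_t^b ∈ ℝ^d. With Δ_t = f(x_t) − f* and Δ_{t+1} = f(x_{t+1}) − f*, one has (η_t/2)·‖∇f(x_t)‖² ≤ Δ_t − Δ_{t+1} + L·η_t²·‖θ_t^u‖² + (L·η_t² − η_t)·⟨∇f(x_t), θ_t^u⟩ + (3η_t/2)·‖θ_t^b‖². -/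
open scoped RealInnerProductSpace

/-!
Smoothness bounds `f (x - η g̃)` by the quadratic model `f x - η ⟪G, g̃⟫ + L η² / 2 * ‖g̃‖²`, where
`G` is the gradient at `x` and `g̃ = G + u + b`. With `a = L η ∈ [0, 1]` and the coefficient
of `‖b‖²` lowered to `η`, the gap left by this model in the claimed inequality is `η` times the sum
of squares `(1 - a) / 2 * ‖G + b‖² + a / 2 * ‖u - b‖² + (1 - a) / 2 * ‖b‖²`.
-/

section Taylor

variable {E F : Type*} [NormedAddCommGroup E] [NormedSpace ℝ E] [NormedAddCommGroup F]
  [NormedSpace ℝ F] {f : E → F} {f' : E → E →L[ℝ] F} {s : Set E} {x y : E} {L : ℝ}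

theorem hasDerivWithinAt_comp_segment (hs : StarConvex ℝ x s) (hy : y ∈ s)
    (hf : ∀ z ∈ s, HasFDerivWithinAt f (f' z) s z) {t : ℝ} (ht : t ∈ Set.Icc (0 : ℝ) 1) :
    HasDerivWithinAt (fun r : ℝ => f (x + r • (y - x))) (f' (x + t • (y - x)) (y - x))
      (Set.Icc 0 1) t := by
  have hmaps : Set.MapsTo (fun r : ℝ => x + r • (y - x)) (Set.Icc 0 1) s :=
    fun r hr => hs.add_smul_sub_mem hy hr.1 hr.2
  have hsegment : HasDerivAt (fun r : ℝ => x + r • (y - x)) (y - x) t := by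
    simpa using ((hasDerivAt_id t).smul_const (y - x)).const_add x
  exact (hf _ (hmaps ht)).comp_hasDerivWithinAt t hsegment.hasDerivWithinAt hmaps

theorem norm_sub_sub_fderiv_le_half_mul_sq (hs : StarConvex ℝ x s) (hy : y ∈ s)
    (hf : ∀ z ∈ s, HasFDerivWithinAt f (f' z) s z)
    (hlip : ∀ z ∈ s, ‖f' z - f' x‖ ≤ L * ‖z - x‖) :
    ‖f y - f x - f' x (y - x)‖ ≤ L / 2 * ‖y - x‖ ^ 2 := by
  set v := y - x with hv
  let remainder : ℝ → F := fun t => f (x + t • v) - f x - t • f' x v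
  have hremainder : ∀ t ∈ Set.Icc (0 : ℝ) 1,
      HasDerivWithinAt remainder (f' (x + t • v) v - f' x v) (Set.Icc 0 1) t := by
    intro t ht
    have hlinear : HasDerivAt (fun r : ℝ => r • f' x v) (f' x v) t := by
      simpa using (hasDerivAt_id t).smul_const (f' x v)
    exact ((hasDerivWithinAt_comp_segment hs hy hf ht).sub_const (f x)).sub
      hlinear.hasDerivWithinAt
  have hquadratic (t : ℝ) :
      HasDerivAt (fun r : ℝ => L / 2 * ‖v‖ ^ 2 * r ^ 2) (L * t * ‖v‖ ^ 2) t :=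
    ((hasDerivAt_pow 2 t).const_mul (L / 2 * ‖v‖ ^ 2)).congr_deriv (by norm_num; ring)
  have hderiv_le : ∀ t ∈ Set.Ico (0 : ℝ) 1, ‖f' (x + t • v) v - f' x v‖ ≤ L * t * ‖v‖ ^ 2 := by
    intro t ht
    calc ‖f' (x + t • v) v - f' x v‖
        ≤ ‖f' (x + t • v) - f' x‖ * ‖v‖ := (f' (x + t • v) - f' x).le_opNorm v
      _ ≤ L * ‖x + t • v - x‖ * ‖v‖ := by
          gcongr
          exact hlip _ (hs.add_smul_sub_mem hy ht.1 ht.2.le)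
      _ = L * t * ‖v‖ ^ 2 := by
          rw [add_sub_cancel_left, norm_smul, Real.norm_of_nonneg ht.1]
          ring
  have hbound : ‖remainder 1‖ ≤ L / 2 * ‖v‖ ^ 2 * 1 ^ 2 :=
    image_norm_le_of_norm_deriv_right_le_deriv_boundary
      (fun t ht => (hremainder t ht).continuousWithinAt)
      (fun t ht => (hremainder t (Set.Ico_subset_Icc_self ht)).mono_of_mem_nhdsWithin
        (Icc_mem_nhdsGE_of_mem ht))
      (by simp [remainder]) hquadratic hderiv_le (Set.right_mem_Icc.2 zero_le_one)
  simpa [remainder, hv] using hbound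

end Taylor

section InnerProductSpace

variable {E : Type*} [NormedAddCommGroup E] [InnerProductSpace ℝ E]

theorem neg_inner_add_half_mul_norm_sq_le {a : ℝ} (ha₀ : 0 ≤ a) (ha₁ : a ≤ 1) (g u b : E) :
    -⟪g, g + u + b⟫ + a / 2 * ‖g + u + b‖ ^ 2 ≤
      -(1 / 2) * ‖g‖ ^ 2 + a * ‖u‖ ^ 2 + (a - 1) * ⟪g, u⟫ + ‖b‖ ^ 2 := by
  have hgap : -(1 / 2) * ‖g‖ ^ 2 + a * ‖u‖ ^ 2 + (a - 1) * ⟪g, u⟫ + ‖b‖ ^ 2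
      - (-⟪g, g + u + b⟫ + a / 2 * ‖g + u + b‖ ^ 2) =
      (1 - a) / 2 * ‖g + b‖ ^ 2 + a / 2 * ‖u - b‖ ^ 2 + (1 - a) / 2 * ‖b‖ ^ 2 := by
    simp only [norm_add_sq_real, norm_sub_sq_real, inner_add_left, inner_add_right,
      real_inner_self_eq_norm_sq]
    ring
  have : 0 ≤ 1 - a := sub_nonneg.2 ha₁
  rw [← sub_nonneg, hgap]
  positivity

variable [CompleteSpace E] {f : E → ℝ} {f' : E → E} {s : Set E} {x y : E} {L : ℝ}

theorem le_add_inner_gradient_add_half_mul_sq (hs : StarConvex ℝ x s) (hy : y ∈ s)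
    (hf : ∀ z ∈ s, HasGradientWithinAt f (f' z) s z)
    (hlip : ∀ z ∈ s, ‖f' z - f' x‖ ≤ L * ‖z - x‖) :
    f y ≤ f x + ⟪f' x, y - x⟫ + L / 2 * ‖y - x‖ ^ 2 := by
  have htaylor : ‖f y - f x - ⟪f' x, y - x⟫‖ ≤ L / 2 * ‖y - x‖ ^ 2 :=
    norm_sub_sub_fderiv_le_half_mul_sq hs hy
      (fun z hz => hasGradientWithinAt_iff_hasFDerivWithinAt.1 (hf z hz))
      (fun z hz => by simpa only [← map_sub, LinearIsometryEquiv.norm_map] using hlip z hz)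
  linarith [(Real.le_norm_self _).trans htaylor]

theorem nonconvex_per_iteration_bound_general (hs : StarConvex ℝ x s)
    (hf : ∀ z ∈ s, HasGradientWithinAt f (f' z) s z)
    (hlip : ∀ z ∈ s, ‖f' z - f' x‖ ≤ L * ‖z - x‖) (hL : 0 ≤ L)
    {η : ℝ} (hη : 0 ≤ η) (hLη : L * η ≤ 1) {u b : E} (hy : y ∈ s)
    (hstep : y = x - η • (f' x + u + b)) :
    η / 2 * ‖f' x‖ ^ 2 ≤
      f x - f y + L * η ^ 2 * ‖u‖ ^ 2 + (L * η ^ 2 - η) * ⟪f' x, u⟫ + η * ‖b‖ ^ 2 := by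
  have hdisplacement : y - x = -(η • (f' x + u + b)) := by rw [hstep, sub_sub_cancel_left]
  have hdescent : f y ≤ f x +
      η * (-⟪f' x, f' x + u + b⟫ + L * η / 2 * ‖f' x + u + b‖ ^ 2) := by
    calc f y ≤ f x + ⟪f' x, y - x⟫ + L / 2 * ‖y - x‖ ^ 2 :=
          le_add_inner_gradient_add_half_mul_sq hs hy hf hlip
      _ = f x + η * (-⟪f' x, f' x + u + b⟫ + L * η / 2 * ‖f' x + u + b‖ ^ 2) := by
          rw [hdisplacement, inner_neg_right, real_inner_smul_right, norm_neg, norm_smul,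
            Real.norm_of_nonneg hη]
          ring
  have hmodel := mul_le_mul_of_nonneg_left
    (neg_inner_add_half_mul_norm_sq_le (mul_nonneg hL hη) hLη (f' x) u b) hη
  linarith

end InnerProductSpace

/-- Per-iteration inequality for (clipped) SGD on non-convex smooth objectives. -/
theorem nonconvex_per_iteration_bound
    {d : ℕ} (f : EuclideanSpace ℝ (Fin d) → ℝ)
    (L : ℝ) (hL : 0 < L)
    (hdiff : Differentiable ℝ f)
    (hsmooth : ∀ x y, ‖gradient f x - gradient f y‖ ≤ L * ‖x - y‖)
    (fstar : ℝ) (hfstar : ∀ x, fstar ≤ f x)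
    (ηt : ℝ) (hη0 : 0 < ηt) (hη : ηt ≤ 1 / L)
    (xt gt xt1 : EuclideanSpace ℝ (Fin d)) (hupdate : xt1 = xt - ηt • gt)
    (θt θtu θtb : EuclideanSpace ℝ (Fin d))
    (hθ : θt = gt - gradient f xt) (hdecomp : θt = θtu + θtb) :
    ηt / 2 * ‖gradient f xt‖ ^ 2 ≤
      (f xt - fstar) - (f xt1 - fstar) + L * ηt ^ 2 * ‖θtu‖ ^ 2
        + (L * ηt ^ 2 - ηt) * ⟪gradient f xt, θtu⟫ + 3 * ηt / 2 * ‖θtb‖ ^ 2 := by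
  have hg : gradient f xt + θtu + θtb = gt := by
    rw [add_assoc, ← hdecomp, hθ, add_sub_cancel]
  have hbound := nonconvex_per_iteration_bound_general (starConvex_univ xt)
    (fun z _ => hasGradientWithinAt_univ.2 (hdiff z).hasGradientAt) (fun z _ => hsmooth z xt) hL.le
    hη0.le ((le_div_iff₀' hL).1 hη) (Set.mem_univ xt1) (hg.symm ▸ hupdate)
  linarith [mul_nonneg hη0.le (sq_nonneg ‖θtb‖)]
end

section
/- Let f : ℝ^d → ℝ be differentiable and L-smooth with f* such that f(x) ≥ f* for all x. Let η > 0 with η ≤ 1/L, let (g̃_t)_{t≥1} be vectors in ℝ^d, and define iterates x_{t+1} = x_t − η·g̃_t from x₁ ∈ ℝ^d. Let θ_t = g̃_t − ∇f(x_t) = θ_t^u + θ_t^b and Δ_t = f(x_t) − f*. Then for every k ≥ 1: ∑_{t=1}^{k} (η/2)·‖∇f(x_t)‖² ≤ Δ₁ − Δ_{k+1} + ∑_{t=1}^{k} L·η²·‖θ_t^u‖² + ∑_{t=1}^{k} (L·η² − η)·⟨∇f(x_t), θ_t^u⟩ + ∑_{t=1}^{k} (3η/2)·‖θ_t^b‖².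 -/
open scoped RealInnerProductSpace
open Finset

/-!
An `L`-Lipschitz gradient gives `f (x + v) ≤ f x + ⟪∇f x, v⟫ + L / 2 * ‖v‖ ^ 2`. For the step
`v = -η • (∇f x + u + b)` the inner product `⟪∇f x, u⟫` is kept as it is, since it has mean zero
when `u` is the unbiased part of the gradient error. Young's inequality removes `⟪u, b⟫` and
`⟪∇f x, b⟫`; because `L * η ≤ 1`, the latter and the quadratic term together cost exactly half of
the decrease `η * ‖∇f x‖ ^ 2`. The resulting bounds on `f (x t) - f (x (t + 1))` telescope.
-/

section TaylorBound

variable {E F : Type*} [NormedAddCommGroup E] [NormedSpace ℝ E]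
  [NormedAddCommGroup F] [NormedSpace ℝ F]

theorem norm_image_sub_sub_le_half_mul_sq_of_starConvex
    {f : E → F} {f' : E → E →L[ℝ] F} {s : Set E} {L : ℝ} {x y : E} (hs : StarConvex ℝ x s)
    (hf : ∀ z ∈ s, HasFDerivWithinAt f (f' z) s z)
    (hf' : ∀ z ∈ s, ‖f' z - f' x‖ ≤ L * ‖z - x‖) (hy : y ∈ s) :
    ‖f y - f x - f' x (y - x)‖ ≤ L / 2 * ‖y - x‖ ^ 2 := by
  set v := y - x with hv
  have hmem : Set.MapsTo (fun r : ℝ ↦ x + r • v) (Set.Icc 0 1) s :=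
    fun r hr ↦ hs.add_smul_sub_mem hy hr.1 hr.2
  have hremainder (r : ℝ) (hr : r ∈ Set.Icc (0 : ℝ) 1) :
      HasDerivWithinAt (fun r : ℝ ↦ f (x + r • v) - f x - r • f' x v)
        ((f' (x + r • v) - f' x) v) (Set.Icc 0 1) r := by
    have hline : HasDerivWithinAt (fun r : ℝ ↦ x + r • v) v (Set.Icc 0 1) r := by
      simpa using ((hasDerivWithinAt_id r _).smul_const v).const_add x
    have hlin : HasDerivWithinAt (fun r : ℝ ↦ r • f' x v) (f' x v) (Set.Icc 0 1) r := by
      simpa using (hasDerivWithinAt_id r _).smul_const (f' x v)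
    exact (((hf _ (hmem hr)).comp_hasDerivWithinAt r hline hmem).sub_const (f x)).sub hlin
  have hquad (r : ℝ) : HasDerivAt (fun r : ℝ ↦ L / 2 * ‖v‖ ^ 2 * r ^ 2) (L * ‖v‖ ^ 2 * r) r :=
    ((hasDerivAt_pow 2 r).const_mul (L / 2 * ‖v‖ ^ 2)).congr_deriv (by push_cast; ring)
  have hbound (r : ℝ) (hr : r ∈ Set.Ico (0 : ℝ) 1) :
      ‖(f' (x + r • v) - f' x) v‖ ≤ L * ‖v‖ ^ 2 * r := by
    calc ‖(f' (x + r • v) - f' x) v‖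
        ≤ ‖f' (x + r • v) - f' x‖ * ‖v‖ := ContinuousLinearMap.le_opNorm _ v
      _ ≤ L * ‖x + r • v - x‖ * ‖v‖ := by
          gcongr
          exact hf' _ (hmem (Set.Ico_subset_Icc_self hr))
      _ = L * ‖v‖ ^ 2 * r := by
          rw [add_sub_cancel_left, norm_smul, Real.norm_of_nonneg hr.1]
          ring
  have hfence := image_norm_le_of_norm_deriv_right_le_deriv_boundary
    (fun r hr ↦ (hremainder r hr).continuousWithinAt)
    (fun r hr ↦ (hremainder r (Set.Ico_subset_Icc_self hr)).mono_of_mem_nhdsWithin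
      (Icc_mem_nhdsGE_of_mem hr))
    (by simp) hquad hbound (Set.right_mem_Icc.2 zero_le_one)
  simpa [hv] using hfence

end TaylorBound

theorem norm_add_sq_le_two_mul_add_sq {E : Type*} [SeminormedAddCommGroup E] (u b : E) :
    ‖u + b‖ ^ 2 ≤ 2 * (‖u‖ ^ 2 + ‖b‖ ^ 2) :=
  (pow_le_pow_left₀ (norm_nonneg _) (norm_add_le u b) 2).trans add_sq_le

section InnerProductSpace

variable {E : Type*} [NormedAddCommGroup E] [InnerProductSpace ℝ E]

theorem neg_inner_le_half_add_sq (g b : E) : -⟪g, b⟫ ≤ (‖g‖ ^ 2 + ‖b‖ ^ 2) / 2 := by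
  linarith [norm_add_sq_real g b, sq_nonneg ‖g + b‖]

theorem quadratic_model_inexact_step_le {L η : ℝ} (hL : 0 ≤ L) (hη0 : 0 ≤ η) (hη : L * η ≤ 1)
    (g u b : E) :
    ⟪g, -(η • (g + (u + b)))⟫ + L / 2 * ‖-(η • (g + (u + b)))‖ ^ 2 ≤
      -(η / 2 * ‖g‖ ^ 2) + L * η ^ 2 * ‖u‖ ^ 2 + (L * η ^ 2 - η) * ⟪g, u⟫ + η * ‖b‖ ^ 2 := by
  have hLη : 0 ≤ η - L * η ^ 2 := by
    linarith [mul_le_mul_of_nonneg_right hη hη0]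
  have hinner : ⟪g, -(η • (g + (u + b)))⟫ = -η * (‖g‖ ^ 2 + ⟪g, u⟫ + ⟪g, b⟫) := by
    simp only [inner_neg_right, real_inner_smul_right, inner_add_right, real_inner_self_eq_norm_sq]
    ring
  have hnorm : ‖-(η • (g + (u + b)))‖ ^ 2 =
      η ^ 2 * (‖g‖ ^ 2 + 2 * (⟪g, u⟫ + ⟪g, b⟫) + ‖u + b‖ ^ 2) := by
    rw [norm_neg, norm_smul, mul_pow, Real.norm_of_nonneg hη0, norm_add_sq_real, inner_add_right]
  calc ⟪g, -(η • (g + (u + b)))⟫ + L / 2 * ‖-(η • (g + (u + b)))‖ ^ 2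
      = -(η - L * η ^ 2 / 2) * ‖g‖ ^ 2 + (L * η ^ 2 - η) * ⟪g, u⟫
          + (η - L * η ^ 2) * -⟪g, b⟫ + L * η ^ 2 / 2 * ‖u + b‖ ^ 2 := by
        rw [hinner, hnorm]
        ring
    _ ≤ -(η - L * η ^ 2 / 2) * ‖g‖ ^ 2 + (L * η ^ 2 - η) * ⟪g, u⟫
          + (η - L * η ^ 2) * ((‖g‖ ^ 2 + ‖b‖ ^ 2) / 2)
          + L * η ^ 2 / 2 * (2 * (‖u‖ ^ 2 + ‖b‖ ^ 2)) := by
        gcongr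
        · exact neg_inner_le_half_add_sq g b
        · exact norm_add_sq_le_two_mul_add_sq u b
    _ = -(η / 2 * ‖g‖ ^ 2) + L * η ^ 2 * ‖u‖ ^ 2 + (L * η ^ 2 - η) * ⟪g, u⟫ + η * ‖b‖ ^ 2
          - (η - L * η ^ 2) / 2 * ‖b‖ ^ 2 := by ring
    _ ≤ -(η / 2 * ‖g‖ ^ 2) + L * η ^ 2 * ‖u‖ ^ 2 + (L * η ^ 2 - η) * ⟪g, u⟫ + η * ‖b‖ ^ 2 :=
        sub_le_self _ (by positivity)

end InnerProductSpace

section GradientDescent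

variable {E : Type*} [NormedAddCommGroup E] [InnerProductSpace ℝ E] [CompleteSpace E]

theorem le_add_inner_add_half_mul_sq_of_starConvex {f : E → ℝ} {f' : E → E} {s : Set E} {L : ℝ}
    {x y : E} (hs : StarConvex ℝ x s) (hf : ∀ z ∈ s, HasGradientWithinAt f (f' z) s z)
    (hf' : ∀ z ∈ s, ‖f' z - f' x‖ ≤ L * ‖z - x‖) (hy : y ∈ s) :
    f y ≤ f x + ⟪f' x, y - x⟫ + L / 2 * ‖y - x‖ ^ 2 := by
  have htaylor := norm_image_sub_sub_le_half_mul_sq_of_starConvex hs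
    (fun z hz ↦ (hf z hz).hasFDerivWithinAt)
    (fun z hz ↦ by simpa only [← map_sub, LinearIsometryEquiv.norm_map] using hf' z hz) hy
  rw [InnerProductSpace.toDual_apply_apply] at htaylor
  linarith [(Real.le_norm_self _).trans htaylor]

theorem half_mul_sq_norm_gradient_le_of_inexact_step {f : E → ℝ} {L η : ℝ} {x : E}
    (hdiff : Differentiable ℝ f)
    (hsmooth : ∀ y, ‖gradient f y - gradient f x‖ ≤ L * ‖y - x‖)
    (hL : 0 ≤ L) (hη0 : 0 ≤ η) (hη : L * η ≤ 1) (u b : E) :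
    η / 2 * ‖gradient f x‖ ^ 2 ≤
      f x - f (x - η • (gradient f x + (u + b))) + L * η ^ 2 * ‖u‖ ^ 2
        + (L * η ^ 2 - η) * ⟪gradient f x, u⟫ + η * ‖b‖ ^ 2 := by
  have hgrad (z : E) : HasGradientWithinAt f (gradient f z) Set.univ z :=
    hasGradientWithinAt_univ.2 (hdiff z).hasGradientAt
  have hdescent := le_add_inner_add_half_mul_sq_of_starConvex (starConvex_univ x)
    (fun z _ ↦ hgrad z) (fun z _ ↦ hsmooth z)
    (Set.mem_univ (x - η • (gradient f x + (u + b))))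
  rw [sub_sub_cancel_left] at hdescent
  linarith [quadratic_model_inexact_step_le hL hη0 hη (gradient f x) u b]

theorem nonconvex_summed_bound_general {f : E → ℝ} {L η : ℝ} (hdiff : Differentiable ℝ f)
    (hsmooth : ∀ x y, ‖gradient f x - gradient f y‖ ≤ L * ‖x - y‖)
    (hL : 0 ≤ L) (hη0 : 0 ≤ η) (hη : L * η ≤ 1) {x u b : ℕ → E}
    (hupdate : ∀ t, 1 ≤ t → x (t + 1) = x t - η • (gradient f (x t) + (u t + b t))) (k : ℕ) :
    ∑ t ∈ Icc 1 k, η / 2 * ‖gradient f (x t)‖ ^ 2 ≤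
      f (x 1) - f (x (k + 1))
        + ∑ t ∈ Icc 1 k, L * η ^ 2 * ‖u t‖ ^ 2
        + ∑ t ∈ Icc 1 k, (L * η ^ 2 - η) * ⟪gradient f (x t), u t⟫
        + ∑ t ∈ Icc 1 k, η * ‖b t‖ ^ 2 := by
  induction k with
  | zero => simp
  | succ k ih =>
    have hstep := half_mul_sq_norm_gradient_le_of_inexact_step hdiff
      (fun y ↦ hsmooth y (x (k + 1))) hL hη0 hη (u (k + 1)) (b (k + 1))
    rw [← hupdate (k + 1) (Nat.le_add_left 1 k)] at hstep
    simp only [sum_Icc_succ_top (Nat.le_add_left 1 k)]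
    linarith

end GradientDescent

/-- Summed inequality for (clipped) SGD on non-convex smooth objectives. -/
theorem nonconvex_summed_bound
    {d : ℕ} (f : EuclideanSpace ℝ (Fin d) → ℝ)
    (L : ℝ) (hL : 0 < L)
    (hdiff : Differentiable ℝ f)
    (hsmooth : ∀ x y, ‖gradient f x - gradient f y‖ ≤ L * ‖x - y‖)
    (fstar : ℝ) (hfstar : ∀ x, fstar ≤ f x)
    (η : ℝ) (hη0 : 0 < η) (hη : η ≤ 1 / L)
    (x gt : ℕ → EuclideanSpace ℝ (Fin d))
    (hupdate : ∀ t, 1 ≤ t → x (t + 1) = x t - η • gt t)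
    (θ θu θb : ℕ → EuclideanSpace ℝ (Fin d))
    (hθ : ∀ t, θ t = gt t - gradient f (x t))
    (hdecomp : ∀ t, θ t = θu t + θb t) :
    ∀ k, 1 ≤ k →
      ∑ t ∈ Icc 1 k, η / 2 * ‖gradient f (x t)‖ ^ 2 ≤
        (f (x 1) - fstar) - (f (x (k + 1)) - fstar)
          + ∑ t ∈ Icc 1 k, L * η ^ 2 * ‖θu t‖ ^ 2
          + ∑ t ∈ Icc 1 k, (L * η ^ 2 - η) * ⟪gradient f (x t), θu t⟫
          + ∑ t ∈ Icc 1 k, 3 * η / 2 * ‖θb t‖ ^ 2 := by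
  intro k _
  have hgt (t : ℕ) : gt t = gradient f (x t) + (θu t + θb t) := by
    rw [← hdecomp, hθ, add_sub_cancel]
  rw [sub_sub_sub_cancel_right]
  refine (nonconvex_summed_bound_general hdiff hsmooth hL.le hη0.le ((le_div_iff₀' hL).1 hη)
    (fun t ht ↦ hgt t ▸ hupdate t ht) k).trans ?_
  gcongr
  linarith
end

section
/- Let L > 0, Δ₁ > 0, T ≥ 2, δ ∈ (0,1), p ∈ (1,2], σ > 0, and suppose λ > 0 and η > 0 satisfy (1/L)·(σ/λ)^p ≤ η, η ≤ 1/L, (σ/λ)^p·T^{p/(3p−2)} ≤ 1/32, and T·L·(σ/λ)^p·λ²·η² ≤ Δ₁/2048, together with η·λ = √Δ₁·T^{(1−p)/(3p−2)}/(8√L·ln(4T/δ)). Set F = 64·L·Δ₁·σ^p·λ^{2−p}·η²·T and a = ( (4/3)·√(L·Δ₁)·η·λ + √( 16·L·Δ₁·η²·λ²/9 + 2F ) )·ln(4T/δ). Then a ≤ 7·Δ₁/12. -/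
/-!
Write `ℓ = log (4T/δ)` and `X = T ^ ((1 - p) / (3p - 2)) ≤ 1`. The choice of `η λ` makes
`√(L Δ₁) η λ ℓ` equal to `Δ₁ X / 8`, and since `T ^ (p / (3p - 2)) = X² T` it turns `F ℓ²` into
`Δ₁² (σ/λ) ^ p T ^ (p / (3p - 2)) ≤ Δ₁² / 32`. With `s = (4/3) √(L Δ₁) η λ`, subadditivity of the
square root then gives `a = (s + √(s² + 2F)) ℓ ≤ 2 s ℓ + √(2F) ℓ ≤ 2 (Δ₁ / 6) + Δ₁ / 4`.
-/

theorem add_sqrt_sq_add_le {x : ℝ} (hx : 0 ≤ x) (y : ℝ) : x + √(x ^ 2 + y) ≤ 2 * x + √y := by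
  suffices √(x ^ 2 + y) ≤ x + √y by linarith
  refine Real.sqrt_le_iff.2 ⟨by positivity, ?_⟩
  have hy : y ≤ √y ^ 2 := (Real.sqrt_le_left (Real.sqrt_nonneg y)).1 le_rfl
  have hcross : 0 ≤ 2 * x * √y := by positivity
  linarith [add_sq x (√y)]

theorem sqrt_mul_le_of_mul_sq_le {v l β : ℝ} (hl : 0 ≤ l) (hβ : 0 ≤ β) (h : v * l ^ 2 ≤ β ^ 2) :
    √v * l ≤ β :=
  calc √v * l = √(v * l ^ 2) := by rw [Real.sqrt_mul' v (sq_nonneg l), Real.sqrt_sq hl]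
    _ ≤ β := Real.sqrt_le_iff.2 ⟨hβ, h⟩

theorem add_sqrt_sq_add_mul_le {s v l α β : ℝ} (hs : 0 ≤ s) (hl : 0 ≤ l) (hβ : 0 ≤ β)
    (hα : s * l ≤ α) (hv : v * l ^ 2 ≤ β ^ 2) : (s + √(s ^ 2 + v)) * l ≤ 2 * α + β :=
  calc (s + √(s ^ 2 + v)) * l ≤ (2 * s + √v) * l :=
        mul_le_mul_of_nonneg_right (add_sqrt_sq_add_le hs v) hl
    _ = 2 * (s * l) + √v * l := by ring
    _ ≤ 2 * α + β := by gcongr; exact sqrt_mul_le_of_mul_sq_le hl hβ hv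

theorem rpow_mul_rpow_sub_eq {x y : ℝ} (hx : 0 ≤ x) (hy : 0 < y) (p q : ℝ) :
    x ^ p * y ^ (q - p) = (x / y) ^ p * y ^ q := by
  rw [Real.div_rpow hx hy.le, Real.rpow_sub hy]
  ring

theorem rpow_div_eq_sq_mul {x p : ℝ} (hx : 0 < x) (hp : 3 * p - 2 ≠ 0) :
    x ^ (p / (3 * p - 2)) = (x ^ ((1 - p) / (3 * p - 2))) ^ 2 * x := by
  have hexp : p / (3 * p - 2) = (1 - p) / (3 * p - 2) * 2 + 1 := by
    rw [div_mul_eq_mul_div, div_add_one hp]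
    ring
  rw [hexp, Real.rpow_add_one hx.ne', Real.rpow_mul hx.le, Real.rpow_two]

theorem sqrt_mul_stepsize_eq {L Δ X ℓ c : ℝ} (hL : 0 < L) (hΔ : 0 ≤ Δ)
    (hc : c = √Δ * X / (8 * √L * ℓ)) : √(L * Δ) * c = Δ * X / (8 * ℓ) :=
  calc √(L * Δ) * c = √Δ ^ 2 * X / (8 * ℓ) := by
        have hsqrt : √L ≠ 0 := (Real.sqrt_pos.2 hL).ne'
        rw [hc, Real.sqrt_mul hL.le]
        field_simp
    _ = Δ * X / (8 * ℓ) := by rw [Real.sq_sqrt hΔ]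

theorem variance_mul_sq_eq {L Δ σ lam η T p ℓ : ℝ} (hL : 0 < L) (hΔ : 0 ≤ Δ) (hσ : 0 ≤ σ)
    (hlam : 0 < lam) (hT : 0 < T) (hp : 3 * p - 2 ≠ 0) (hℓ : ℓ ≠ 0)
    (hstep : η * lam = √Δ * T ^ ((1 - p) / (3 * p - 2)) / (8 * √L * ℓ)) :
    64 * L * Δ * σ ^ p * lam ^ (2 - p) * η ^ 2 * T * ℓ ^ 2
      = Δ ^ 2 * ((σ / lam) ^ p * T ^ (p / (3 * p - 2))) := by
  have hscale : σ ^ p * lam ^ (2 - p) = (σ / lam) ^ p * lam ^ 2 := by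
    rw [rpow_mul_rpow_sub_eq hσ hlam, Real.rpow_two]
  calc 64 * L * Δ * σ ^ p * lam ^ (2 - p) * η ^ 2 * T * ℓ ^ 2
      = 64 * (L * Δ) * (σ ^ p * lam ^ (2 - p)) * η ^ 2 * T * ℓ ^ 2 := by ring
    _ = 64 * (√(L * Δ) * (η * lam)) ^ 2 * (σ / lam) ^ p * T * ℓ ^ 2 := by
        rw [hscale, mul_pow, Real.sq_sqrt (by positivity)]
        ring
    _ = Δ ^ 2 * ((σ / lam) ^ p * T ^ (p / (3 * p - 2))) := by
        rw [sqrt_mul_stepsize_eq hL hΔ hstep, rpow_div_eq_sq_mul hT hp]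
        field_simp
        ring

theorem freedman_threshold_bound_general {L Δ p σ lam η T ℓ F a : ℝ}
    (hL : 0 < L) (hΔ : 0 ≤ Δ) (hT : 1 ≤ T) (hℓ : 0 < ℓ) (hp : 1 ≤ p) (hσ : 0 ≤ σ) (hlam : 0 < lam)
    (hnoise : (σ / lam) ^ p * T ^ (p / (3 * p - 2)) ≤ 1 / 32)
    (hstep : η * lam = √Δ * T ^ ((1 - p) / (3 * p - 2)) / (8 * √L * ℓ))
    (hF : F = 64 * L * Δ * σ ^ p * lam ^ (2 - p) * η ^ 2 * T)
    (ha : a = (4 / 3 * √(L * Δ) * η * lam + √(16 * L * Δ * η ^ 2 * lam ^ 2 / 9 + 2 * F)) * ℓ) :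
    a ≤ 7 * Δ / 12 := by
  have hp' : 0 < 3 * p - 2 := by linarith
  set X := T ^ ((1 - p) / (3 * p - 2))
  have hX : X ≤ 1 := Real.rpow_le_one_of_one_le_of_nonpos hT
    (div_nonpos_of_nonpos_of_nonneg (by linarith) hp'.le)
  have hs : 4 / 3 * √(L * Δ) * η * lam = Δ * X / (6 * ℓ) := by
    linear_combination 4 / 3 * sqrt_mul_stepsize_eq hL hΔ hstep
  have hsq : 16 * L * Δ * η ^ 2 * lam ^ 2 / 9 = (4 / 3 * √(L * Δ) * η * lam) ^ 2 := by
    linear_combination -(16 / 9 * η ^ 2 * lam ^ 2) * Real.sq_sqrt (mul_nonneg hL.le hΔ)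
  have hsl : Δ * X / (6 * ℓ) * ℓ ≤ Δ / 6 :=
    calc Δ * X / (6 * ℓ) * ℓ = Δ * X / 6 := by field_simp
      _ ≤ Δ / 6 := by gcongr; exact mul_le_of_le_one_right hΔ hX
  have hv : 2 * F * ℓ ^ 2 ≤ (Δ / 4) ^ 2 :=
    calc 2 * F * ℓ ^ 2 = 2 * (Δ ^ 2 * ((σ / lam) ^ p * T ^ (p / (3 * p - 2)))) := by
          rw [hF, mul_assoc, variance_mul_sq_eq hL hΔ hσ hlam (by linarith) hp'.ne' hℓ.ne' hstep]
      _ ≤ 2 * (Δ ^ 2 * (1 / 32)) := by gcongr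
      _ = (Δ / 4) ^ 2 := by ring
  calc a = (Δ * X / (6 * ℓ) + √((Δ * X / (6 * ℓ)) ^ 2 + 2 * F)) * ℓ := by rw [ha, hsq, hs]
    _ ≤ 2 * (Δ / 6) + Δ / 4 :=
        add_sqrt_sq_add_mul_le (by positivity) hℓ.le (by positivity) hsl hv
    _ = 7 * Δ / 12 := by ring

/-- Arithmetic bound on the Freedman deviation threshold `a` used in the non-convex
analysis of clipped-SGD. -/
theorem freedman_threshold_bound
    (L Δ1 δ p σ : ℝ) (T : ℕ)
    (hL : 0 < L) (hΔ1 : 0 < Δ1) (hT : 2 ≤ T) (hδ0 : 0 < δ) (hδ1 : δ < 1)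
    (hp1 : 1 < p) (hp2 : p ≤ 2) (hσ : 0 < σ)
    (lam η : ℝ) (hlam : 0 < lam) (hη : 0 < η)
    (h1 : (1 / L) * (σ / lam) ^ p ≤ η)
    (h2 : η ≤ 1 / L)
    (h3 : (σ / lam) ^ p * (T : ℝ) ^ (p / (3 * p - 2)) ≤ 1 / 32)
    (h4 : (T : ℝ) * L * (σ / lam) ^ p * lam ^ 2 * η ^ 2 ≤ Δ1 / 2048)
    (h5 : η * lam = Real.sqrt Δ1 * (T : ℝ) ^ ((1 - p) / (3 * p - 2))
            / (8 * Real.sqrt L * Real.log (4 * T / δ)))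
    (F a : ℝ)
    (hF : F = 64 * L * Δ1 * σ ^ p * lam ^ (2 - p) * η ^ 2 * T)
    (ha : a = (4 / 3 * Real.sqrt (L * Δ1) * η * lam
          + Real.sqrt (16 * L * Δ1 * η ^ 2 * lam ^ 2 / 9 + 2 * F))
          * Real.log (4 * T / δ)) :
    a ≤ 7 * Δ1 / 12 := by
  have hT' : (1 : ℝ) ≤ T := by exact_mod_cast one_le_two.trans hT
  have hlog : 0 < Real.log (4 * T / δ) := Real.log_pos ((one_lt_div hδ0).2 (by linarith))
  exact freedman_threshold_bound_general hL hΔ1.le hT' hlog hp1.le hσ.le hlam h3 h5 hF ha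
end
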